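/- Let K be an algebraically closed field, n ≥ 1, and let σ be a regular action of the n-dimensional torus T_n = (K^×)^n on F_n = FreeAlgebra K (Fin n). Then the induced action on affine n-space has a fixed point: there exist constants c_1, …, c_n ∈ K such that for every t ∈ (Kˣ)^n and every i, the K-algebra homomorphism ev_c : F_n → K determined by z_j ↦ c_j satisfies ev_c(σ(t)(z_i)) = c_i. Consequently, after the translation of generators z_i ↦ z_i − c_i, the images σ(t)(z_i) have zero constant term. -/

import Mathlib

open FreeAlgebra

/-- A torus action `σ` of `(Kˣ)^r` on the free algebra is *regular* if the image of each
generator depends on `t` as a Laurent polynomial with coefficients in the free algebra. -/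
def TorusActionIsRegular {K : Type} [Field K] {n r : ℕ}
    (σ : (Fin r → Kˣ) →* (FreeAlgebra K (Fin n) ≃ₐ[K] FreeAlgebra K (Fin n))) : Prop :=
  ∀ i : Fin n, ∃ a : ((Fin r → ℤ) →₀ FreeAlgebra K (Fin n)),
    ∀ t : Fin r → Kˣ,
      σ t (ι K i) = a.sum fun m c => ((∏ j : Fin r, (t j) ^ (m j) : Kˣ) : K) • c

open MvPolynomial

instance Int.isJacobsonRing : IsJacobsonRing ℤ := by
  refine isJacobsonRing_iff_prime_eq.2 fun P hP => ?_
  by_cases h0 : P = ⊥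
  · subst h0
    refine le_antisymm (fun x hx => ?_) bot_le
    obtain ⟨p, hxp, hp⟩ := Nat.exists_infinite_primes (x.natAbs + 1)
    have hmax : (Ideal.span {(p : ℤ)}).IsMaximal :=
      PrincipalIdealRing.isMaximal_of_irreducible (Nat.prime_iff_prime_int.1 hp).irreducible
    have hdvd := Ideal.mem_span_singleton.1 (Ideal.mem_sInf.1 hx ⟨bot_le, hmax⟩)
    rw [Ideal.mem_bot]
    exact Int.eq_zero_of_abs_lt_dvd hdvd (by rw [Int.abs_eq_natAbs]; omega)
  · have := hP.isMaximal h0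
    exact Ideal.jacobson_eq_self_of_isMaximal

/-- A field that is a quotient of a finitely generated ring is finite. -/
theorem Field.finite_of_surjective_of_finiteType_int {R k : Type*} [CommRing R] [Algebra ℤ R]
    [Algebra.FiniteType ℤ R] [Field k] (f : R →+* k) (hf : Function.Surjective f) : Finite k := by
  have : Algebra.FiniteType ℤ k := Algebra.FiniteType.of_surjective
    ({ f with commutes' := by simp } : R →ₐ[ℤ] k) hf
  have : Module.Finite ℤ k := finite_of_finite_type_of_isJacobsonRing ℤ k
  have hker : ¬ Function.Injective (algebraMap ℤ k) := fun h =>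
    Int.not_isField (isField_of_isIntegral_of_isField h (Field.toIsField k))
  obtain ⟨p, hp⟩ := CharP.exists k
  have hp0 : p ≠ 0 := by
    rintro rfl
    have := CharP.charP_to_charZero k
    exact hker (RingHom.injective_int _)
  have : NeZero p := ⟨hp0⟩
  let _ := ZMod.algebra k p
  have : Module.Finite (ZMod p) k := Module.Finite.of_restrictScalars_finite ℤ (ZMod p) k
  exact Module.finite_of_finite (ZMod p)

theorem eq_zero_of_forall_units_zpow_eq_one {K : Type*} [Field K] [Infinite K] {e : ℤ}
    (h : ∀ u : Kˣ, u ^ e = 1) : e = 0 := by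
  have hpow (u : Kˣ) : u ^ e.natAbs = 1 := by
    rcases Int.natAbs_eq e with he | he
    · simpa [← zpow_natCast, ← he] using h u
    · have := h u
      rw [he, zpow_neg, inv_eq_one, zpow_natCast] at this
      exact this
  have hX : (Polynomial.X ^ (e.natAbs + 1) : Polynomial K) = Polynomial.X ^ 1 := by
    refine Polynomial.funext fun x => ?_
    rcases eq_or_ne x 0 with rfl | hx
    · simp
    · have := congrArg Units.val (hpow (Units.mk0 x hx))
      simp only [Units.val_pow_eq_pow_val, Units.val_mk0, Units.val_one] at this
      simp [pow_succ, this]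
  have := congrArg Polynomial.natDegree hX
  simpa using this

/-- The character `t ↦ ∏ j, t j ^ m j` of the torus, as a homomorphism in the weight `m`. -/
def torusWeight {k : Type*} [CommRing k] {r : ℕ} (t : Fin r → kˣ) :
    Multiplicative (Fin r → ℤ) →* kˣ where
  toFun m := ∏ j, t j ^ m.toAdd j
  map_one' := by simp
  map_mul' a b := by simp [zpow_add, Finset.prod_mul_distrib]

/-- The torus character of weight `m`, as a homomorphism in `t`. -/
def torusCharacter (k : Type*) [CommRing k] {r : ℕ} (m : Fin r → ℤ) : (Fin r → kˣ) →* kˣ where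
  toFun t := ∏ j, t j ^ m j
  map_one' := by simp
  map_mul' a b := by simp [mul_zpow, Finset.prod_mul_distrib]

theorem torusCharacter_mulSingle {k : Type*} [CommRing k] {r : ℕ} (m : Fin r → ℤ) (j : Fin r)
    (u : kˣ) : torusCharacter k m (Pi.mulSingle j u) = u ^ m j := by
  change ∏ i, (Pi.mulSingle j u : Fin r → kˣ) i ^ m i = u ^ m j
  rw [Finset.prod_eq_single j]
  · simp
  · intro i _ hij
    simp [Pi.mulSingle_eq_of_ne hij]
  · simp

theorem torusCharacter_injective (K : Type*) [Field K] [Infinite K] (r : ℕ) :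
    Function.Injective (torusCharacter K : (Fin r → ℤ) → _) := by
  intro m m' h
  funext j
  refine sub_eq_zero.1 (eq_zero_of_forall_units_zpow_eq_one (K := K) fun u => ?_)
  have := DFunLike.congr_fun h (Pi.mulSingle j u)
  rw [torusCharacter_mulSingle, torusCharacter_mulSingle] at this
  rw [zpow_sub, this, mul_inv_cancel]

theorem eq_zero_of_forall_sum_torusCharacter_eq_zero {K : Type*} [Field K] [Infinite K] {r : ℕ}
    {S : Finset (Fin r → ℤ)} {b : (Fin r → ℤ) → K}
    (h : ∀ t, ∑ m ∈ S, b m * (torusCharacter K m t : K) = 0) : ∀ m ∈ S, b m = 0 := by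
  have hli := (linearIndependent_monoidHom (Fin r → Kˣ) K).comp
    (fun m : Fin r → ℤ => (Units.coeHom K).comp (torusCharacter K m)) (fun m m' hm => by
      refine torusCharacter_injective K r (MonoidHom.ext fun t => Units.ext ?_)
      exact DFunLike.congr_fun hm t)
  refine linearIndependent_iff'.1 hli S b (funext fun t => ?_)
  rw [Finset.sum_apply]
  exact h t

section flow

variable {R k : Type*} [CommRing R] [CommRing k] {n r : ℕ}

/-- The self-map of affine space attached to the torus point `t` by Laurent polynomials in `t` with
polynomial coefficients `A`. -/
noncomputable def torusFlow (θ : R →+* k) (A : Fin n → (Fin r → ℤ) →₀ MvPolynomial (Fin n) R)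
    (t : Fin r → kˣ) (c : Fin n → k) (j : Fin n) : k :=
  (A j).sum fun m p => eval₂ θ c p * (torusCharacter k m t : k)

/-- The weight `m` part of the flow transforms under the flow by the character of weight `m`. -/
def IsTorusEquivariant (θ : R →+* k)
    (A : Fin n → (Fin r → ℤ) →₀ MvPolynomial (Fin n) R) : Prop :=
  ∀ (t : Fin r → kˣ) (c : Fin n → k) (i : Fin n) (m : Fin r → ℤ),
    eval₂ θ (torusFlow θ A t c) (A i m) = eval₂ θ c (A i m) * (torusCharacter k m t : k)

/-- Evaluation of Laurent polynomials with polynomial coefficients at `t` and `c`. -/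
noncomputable def laurentEval (θ : R →+* k) (t : Fin r → kˣ) (c : Fin n → k) :
    AddMonoidAlgebra (MvPolynomial (Fin n) R) (Fin r → ℤ) →+* k :=
  AddMonoidAlgebra.liftNCRingHom (eval₂Hom θ c) ((Units.coeHom k).comp (torusWeight t))
    fun _ _ => Commute.all _ _

theorem laurentEval_single (θ : R →+* k) (t : Fin r → kˣ) (c : Fin n → k) (m : Fin r → ℤ)
    (p : MvPolynomial (Fin n) R) :
    laurentEval θ t c (AddMonoidAlgebra.single m p) =
      eval₂ θ c p * (torusCharacter k m t : k) :=
  AddMonoidAlgebra.liftNCRingHom_single _ _ _ _ _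

theorem eq_zero_of_forall_laurentEval {K : Type*} [Field K] [Infinite K] {θ : R →+* K}
    (hθ : Function.Injective θ) {f : AddMonoidAlgebra (MvPolynomial (Fin n) R) (Fin r → ℤ)}
    (h : ∀ t c, laurentEval θ t c f = 0) : f = 0 := by
  refine AddMonoidAlgebra.ext (Finsupp.ext fun m => ?_)
  refine map_injective θ hθ (MvPolynomial.funext fun c => ?_)
  by_cases hm : m ∈ f.coeff.support
  · simpa [eval_map] using eq_zero_of_forall_sum_torusCharacter_eq_zero (fun t => h t c) m hm
  · simp [Finsupp.notMem_support_iff.1 hm]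

/-- The universal Laurent polynomial flow. -/
noncomputable def laurentFlow (A : Fin n → (Fin r → ℤ) →₀ MvPolynomial (Fin n) R) (j : Fin n) :
    AddMonoidAlgebra (MvPolynomial (Fin n) R) (Fin r → ℤ) :=
  (A j).sum fun m p => AddMonoidAlgebra.single m p

theorem laurentEval_eval₂_laurentFlow (θ : R →+* k)
    (A : Fin n → (Fin r → ℤ) →₀ MvPolynomial (Fin n) R) (t : Fin r → kˣ) (c : Fin n → k)
    (p : MvPolynomial (Fin n) R) :
    laurentEval θ t c
        (eval₂ (AddMonoidAlgebra.singleZeroRingHom.comp C) (laurentFlow A) p) =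
      eval₂ θ (torusFlow θ A t c) p := by
  rw [← coe_eval₂Hom, ← RingHom.comp_apply, ← coe_eval₂Hom]
  congr 1
  refine MvPolynomial.ringHom_ext (fun a => ?_) fun j => ?_
  · simp [AddMonoidAlgebra.singleZeroRingHom, laurentEval_single, torusCharacter]
  · simp [laurentFlow, torusFlow, Finsupp.sum, laurentEval_single]

/-- Equivariance over an infinite field spreads to every base change of the coefficients. -/
theorem IsTorusEquivariant.baseChange {K : Type*} [Field K] [Infinite K] {θ : R →+* K}
    (hθ : Function.Injective θ) {A : Fin n → (Fin r → ℤ) →₀ MvPolynomial (Fin n) R}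
    (h : IsTorusEquivariant θ A) (ψ : R →+* k) : IsTorusEquivariant ψ A := by
  intro t c i m
  have key : eval₂ (AddMonoidAlgebra.singleZeroRingHom.comp C) (laurentFlow A) (A i m) =
      AddMonoidAlgebra.single m (A i m) := by
    refine sub_eq_zero.1 (eq_zero_of_forall_laurentEval hθ fun t c => ?_)
    rw [map_sub, laurentEval_eval₂_laurentFlow, laurentEval_single, h, sub_self]
  rw [← laurentEval_eval₂_laurentFlow, key, laurentEval_single]

theorem torusFlow_mul {θ : R →+* k} {A : Fin n → (Fin r → ℤ) →₀ MvPolynomial (Fin n) R}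
    (h : IsTorusEquivariant θ A) (s t : Fin r → kˣ) (c : Fin n → k) :
    torusFlow θ A (s * t) c = torusFlow θ A s (torusFlow θ A t c) := by
  funext j
  refine Finset.sum_congr rfl fun m _ => ?_
  dsimp only
  rw [h t c j m, map_mul, Units.val_mul]
  ring

theorem torusFlow_one {θ : R →+* k} {A : Fin n → (Fin r → ℤ) →₀ MvPolynomial (Fin n) R}
    (h : ∀ j, ((A j).sum fun _ p => p) = X j) (c : Fin n → k) :
    torusFlow θ A 1 c = c := by
  funext j
  have := congrArg (eval₂Hom θ c) (h j)
  simpa [torusFlow, Finsupp.sum] using this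

/-- Over a finite field containing roots of unity of large prime power order, some point is killed
by all coefficients of nonzero weight. -/
theorem exists_forall_eval₂_eq_zero_of_finite {k : Type*} [Field k] [Finite k] {θ : R →+* k}
    {A : Fin n → (Fin r → ℤ) →₀ MvPolynomial (Fin n) R}
    (hone : ∀ j, ((A j).sum fun _ p => p) = X j) (h : IsTorusEquivariant θ A)
    {l e : ℕ} (hl : l.Prime) (hlk : ¬ l ∣ Nat.card k) {ζ : kˣ}
    (hζ : IsPrimitiveRoot ζ (l ^ e)) (he : ∀ i m, A i m ≠ 0 → ∀ j, |m j| < (l ^ e : ℕ)) :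
    ∃ c : Fin n → k, ∀ i m, m ≠ 0 → eval₂ θ c (A i m) = 0 := by
  have : Fact l.Prime := ⟨hl⟩
  let act : MulAction (Fin r → kˣ) (Fin n → k) :=
    { smul := torusFlow θ A
      one_smul := torusFlow_one hone
      mul_smul := torusFlow_mul h }
  let H : Subgroup (Fin r → kˣ) := (powMonoidHom (l ^ e)).ker
  have hH : IsPGroup l H := fun g => ⟨e, Subtype.ext g.2⟩
  have hcard : ¬ l ∣ Nat.card (Fin n → k) := by
    rw [Nat.card_fun]
    exact fun hd => hlk (hl.dvd_of_dvd_pow hd)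
  obtain ⟨c, hc⟩ := hH.nonempty_fixed_point_of_prime_not_dvd_card (Fin n → k) hcard
  refine ⟨c, fun i m hm => ?_⟩
  by_contra hne
  refine hm (funext fun j => ?_)
  have hmem : (Pi.mulSingle j ζ : Fin r → kˣ) ∈ H := by
    change (Pi.mulSingle j ζ : Fin r → kˣ) ^ (l ^ e) = 1
    rw [← Pi.mulSingle_pow, hζ.pow_eq_one, Pi.mulSingle_one]
  have hfix : torusFlow θ A (Pi.mulSingle j ζ) c = c := hc ⟨_, hmem⟩
  have heq := h (Pi.mulSingle j ζ) c i m
  rw [hfix, torusCharacter_mulSingle] at heq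
  have hζm : ζ ^ m j = 1 := Units.ext (mul_left_cancel₀ hne (by rw [← heq]; simp))
  exact Int.eq_zero_of_abs_lt_dvd ((hζ.zpow_eq_one_iff_dvd _).1 hζm)
    (he i m (fun h0 => hne (by simp [h0])) j)

end flow

/-- A nonzero finitely generated ring maps to a finite field with roots of unity of arbitrarily
large prime power order, the prime being different from the characteristic. -/
theorem exists_ringHom_finite_field_isPrimitiveRoot (R : Type) [CommRing R] [Nontrivial R]
    [Algebra ℤ R] [Algebra.FiniteType ℤ R] (N : ℕ) :
    ∃ (k : Type) (_ : Field k) (_ : Finite k) (_ : R →+* k) (l e : ℕ) (ζ : kˣ),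
      l.Prime ∧ ¬ l ∣ Nat.card k ∧ IsPrimitiveRoot ζ (l ^ e) ∧ N < l ^ e := by
  obtain ⟨M, hM⟩ := Ideal.exists_maximal R
  let _ : Field (R ⧸ M) := Ideal.Quotient.field M
  have : Finite (R ⧸ M) :=
    Field.finite_of_surjective_of_finiteType_int (Ideal.Quotient.mk M) Ideal.Quotient.mk_surjective
  obtain ⟨p, hp⟩ := CharP.exists (R ⧸ M)
  have hpp : p.Prime := CharP.char_is_prime (R ⧸ M) p
  obtain ⟨l, hpl, hl⟩ := Nat.exists_infinite_primes (p + 1)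
  have hpl' : p ≠ l := by omega
  have hcop : p.Coprime l := (Nat.coprime_primes hpp hl).2 hpl'
  have : NeZero ((l ^ N : ℕ) : R ⧸ M) := ⟨fun h0 =>
    hpl' ((Nat.prime_dvd_prime_iff_eq hpp hl).1
      (hpp.dvd_of_dvd_pow ((CharP.cast_eq_zero_iff (R ⧸ M) p _).1 h0)))⟩
  have : NeZero (l ^ N) := ⟨pow_ne_zero _ hl.ne_zero⟩
  let k := CyclotomicField (l ^ N) (R ⧸ M)
  have : FiniteDimensional (R ⧸ M) k := IsCyclotomicExtension.finiteDimensional {l ^ N} _ _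
  have hfin : Finite k := Module.finite_of_finite (R ⧸ M)
  obtain ⟨ζ, hζ⟩ := IsCyclotomicExtension.exists_isPrimitiveRoot (S := {l ^ N}) (R ⧸ M) k rfl
    (NeZero.ne _)
  have : CharP k p := charP_of_injective_algebraMap (algebraMap (R ⧸ M) k).injective p
  have hlk : ¬ l ∣ Nat.card k := by
    have := Fintype.ofFinite k
    obtain ⟨m, -, hm⟩ := FiniteField.card k p
    rw [Nat.card_eq_fintype_card, hm]
    exact fun hd => hpl' ((Nat.prime_dvd_prime_iff_eq hl hpp).1 (hl.dvd_of_dvd_pow hd)).symm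
  exact ⟨k, inferInstance, hfin, (algebraMap (R ⧸ M) k).comp (Ideal.Quotient.mk M), l, N,
    (hζ.isUnit (NeZero.ne _)).unit, hl, hlk, hζ.isUnit_unit (NeZero.ne _),
    Nat.lt_pow_self hl.one_lt⟩

/-- Finitely many polynomials over `K` have their coefficients in a finitely generated subring. -/
theorem MvPolynomial.exists_fg_subalgebra_lift {σ K : Type*} [CommRing K]
    (T : Finset (MvPolynomial σ K)) :
    ∃ (R : Subalgebra ℤ K) (g : MvPolynomial σ K → MvPolynomial σ R),
      R.FG ∧ g 0 = 0 ∧ ∀ p ∈ T, map (algebraMap R K) (g p) = p := by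
  classical
  let R := Algebra.adjoin ℤ (T.biUnion fun p => p.coeffs : Set K)
  have hlift : ∀ p ∈ T, ∃ q, map (algebraMap R K) q = p := by
    intro p hp
    refine mem_range_map_iff_coeffs_subset.2 fun a ha => ?_
    exact ⟨⟨a, Algebra.subset_adjoin (Finset.mem_coe.2 (Finset.mem_biUnion.2 ⟨p, hp, ha⟩))⟩, rfl⟩
  choose! g hg using hlift
  refine ⟨R, fun p => if p = 0 then 0 else g p, Subalgebra.fg_adjoin_finset _, by simp, ?_⟩
  intro p hp
  dsimp only
  split_ifs with h0
  · rw [h0, map_zero]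
  · exact hg p hp

/-- Over an algebraically closed field, the coefficients of nonzero weight of a torus action on
affine space have a common zero. -/
theorem exists_forall_eval_eq_zero {K : Type} [Field K] [IsAlgClosed K] {n r : ℕ}
    {A : Fin n → (Fin r → ℤ) →₀ MvPolynomial (Fin n) K}
    (hone : ∀ j, ((A j).sum fun _ p => p) = X j) (h : IsTorusEquivariant (RingHom.id K) A) :
    ∃ c : Fin n → K, ∀ i m, m ≠ 0 → eval c (A i m) = 0 := by
  classical
  by_contra! hno
  let v : Fin n × {m : Fin r → ℤ // m ≠ 0} → MvPolynomial (Fin n) K := fun x => A x.1 x.2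
  have hmem : (1 : MvPolynomial (Fin n) K) ∈ Ideal.span (Set.range v) := by
    rw [← Ideal.eq_top_iff_one, ← Ideal.radical_eq_top,
      ← vanishingIdeal_zeroLocus_eq_radical (K := K)]
    convert vanishingIdeal_empty
    refine Set.eq_empty_of_forall_notMem fun c hc => ?_
    obtain ⟨i, m, hm, hne⟩ := hno c
    rw [zeroLocus_span] at hc
    exact hne (by simpa [aeval_eq_eval] using hc _ ⟨(i, ⟨m, hm⟩), rfl⟩)
  obtain ⟨b, hb⟩ := Finsupp.mem_ideal_span_range_iff_exists_finsupp.1 hmem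
  obtain ⟨R, g, hR, g0, hg⟩ := exists_fg_subalgebra_lift
    (insert 0 ((Finset.univ.biUnion fun i => (A i).support.image (A i)) ∪ b.support.image b))
  have hinj : Function.Injective (algebraMap R K) := Subtype.val_injective
  have hgA (i m) : map (algebraMap R K) (g (A i m)) = A i m := by
    by_cases h0 : A i m = 0
    · simp [h0, g0]
    · exact hg _ (by simp only [Finset.mem_insert, Finset.mem_union, Finset.mem_biUnion,
        Finset.mem_image, Finsupp.mem_support_iff]; exact Or.inr (Or.inl ⟨i, by simp, m, h0, rfl⟩))
  have hgb (x) : map (algebraMap R K) (g (b x)) = b x := by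
    by_cases h0 : b x = 0
    · simp [h0, g0]
    · exact hg _ (by simp only [Finset.mem_insert, Finset.mem_union,
        Finset.mem_image, Finsupp.mem_support_iff]; exact Or.inr (Or.inr ⟨x, h0, rfl⟩))
  let A' : Fin n → (Fin r → ℤ) →₀ MvPolynomial (Fin n) R := fun i => (A i).mapRange g g0
  have hflow (t : Fin r → Kˣ) (c : Fin n → K) :
      torusFlow (algebraMap R K) A' t c = torusFlow (RingHom.id K) A t c := by
    funext j
    rw [torusFlow, Finsupp.sum_mapRange_index (by simp)]
    refine Finset.sum_congr rfl fun m _ => ?_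
    dsimp only
    rw [← hgA j m, eval₂_map, hgA, RingHom.id_comp]
  have hequiv : IsTorusEquivariant (algebraMap R K) A' := by
    intro t c i m
    have := h t c i m
    rw [← hgA i m, eval₂_map, eval₂_map, RingHom.id_comp] at this
    rw [hflow]
    exact this
  have hone' (j) : ((A' j).sum fun _ p => p) = X j := by
    refine map_injective _ hinj ?_
    rw [Finsupp.sum_mapRange_index (by simp), map_X, Finsupp.sum, map_sum]
    simp only [hgA]
    exact hone j
  have hsum : (b.sum fun x a => g a * A' x.1 x.2) = 1 := by
    refine map_injective _ hinj ?_
    rw [map_one, Finsupp.sum, map_sum, ← hb]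
    refine Finset.sum_congr rfl fun x _ => ?_
    rw [map_mul, hgb]
    exact congrArg _ (hgA _ _)
  have : Algebra.FiniteType ℤ R := (Subalgebra.fg_iff_finiteType R).1 hR
  obtain ⟨N, hN⟩ : ∃ N : ℕ, ∀ i m, A i m ≠ 0 → ∀ j, (m j).natAbs ≤ N := by
    refine ⟨Finset.univ.sup fun i => (A i).support.sup fun m => Finset.univ.sup fun j =>
      (m j).natAbs, fun i m hm j => ?_⟩
    exact (Finset.le_sup (f := fun j => (m j).natAbs) (Finset.mem_univ j)).trans
      ((Finset.le_sup (f := fun m : Fin r → ℤ => Finset.univ.sup fun j => (m j).natAbs)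
        (Finsupp.mem_support_iff.2 hm)).trans
        (Finset.le_sup (f := fun i => (A i).support.sup fun m => Finset.univ.sup fun j =>
          (m j).natAbs) (Finset.mem_univ i)))
  obtain ⟨k, _, _, ψ, l, e, ζ, hl, hlk, hζ, hNl⟩ := exists_ringHom_finite_field_isPrimitiveRoot R N
  obtain ⟨c, hc⟩ := exists_forall_eval₂_eq_zero_of_finite hone' (hequiv.baseChange hinj ψ) hl hlk hζ
    (fun i m hm j => by
      have := hN i m (fun h0 => hm (by simp [A', h0, g0])) j
      rw [Int.abs_eq_natAbs]
      omega)
  have := congrArg (eval₂Hom ψ c) hsum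
  rw [Finsupp.sum, map_sum, map_one] at this
  refine zero_ne_one (α := k) ((Finset.sum_eq_zero fun x _ => ?_).symm.trans this)
  rw [map_mul, coe_eval₂Hom, hc _ _ x.2.2, mul_zero]

/-- The evaluation at `c` factors through commutative polynomials. -/
theorem FreeAlgebra.lift_eq_eval {K ι' : Type*} [CommRing K] (c : ι' → K) (x : FreeAlgebra K ι') :
    FreeAlgebra.lift K c x =
      eval c (FreeAlgebra.lift K (X : ι' → MvPolynomial ι' K) x) := by
  have : FreeAlgebra.lift K c =
      (MvPolynomial.aeval c).comp (FreeAlgebra.lift K (X : ι' → MvPolynomial ι' K)) := by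
    ext i
    simp
  rw [this, AlgHom.comp_apply, aeval_eq_eval]

/-- A regular torus action on the free algebra fixes a point of affine space. -/
theorem TorusActionIsRegular.exists_fixed_point {K : Type} [Field K] [IsAlgClosed K] {n r : ℕ}
    {σ : (Fin r → Kˣ) →* (FreeAlgebra K (Fin n) ≃ₐ[K] FreeAlgebra K (Fin n))}
    (hreg : TorusActionIsRegular σ) :
    ∃ c : Fin n → K, ∀ t i, FreeAlgebra.lift K c (σ t (ι K i)) = c i := by
  choose a ha using hreg
  let ab := FreeAlgebra.lift K (X : Fin n → MvPolynomial (Fin n) K)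
  let A : Fin n → (Fin r → ℤ) →₀ MvPolynomial (Fin n) K := fun i => (a i).mapRange ab (map_zero _)
  have hA (t c i) : FreeAlgebra.lift K c (σ t (ι K i)) = torusFlow (RingHom.id K) A t c i := by
    rw [ha, torusFlow, Finsupp.sum_mapRange_index (by simp), Finsupp.sum, map_sum]
    refine Finset.sum_congr rfl fun m _ => ?_
    rw [map_smul, FreeAlgebra.lift_eq_eval, smul_eq_mul, mul_comm]
    rfl
  have hcomp (t c) : (FreeAlgebra.lift K c).comp (σ t : FreeAlgebra K (Fin n) →ₐ[K] _) =
      FreeAlgebra.lift K (torusFlow (RingHom.id K) A t c) := by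
    ext i
    simpa using hA t c i
  have hmul (s t c) : torusFlow (RingHom.id K) A s (torusFlow (RingHom.id K) A t c) =
      torusFlow (RingHom.id K) A (s * t) c := by
    funext i
    rw [← hA, ← hA, ← hcomp, mul_comm s t, map_mul]
    rfl
  have h1 (c) : torusFlow (RingHom.id K) A 1 c = c := by
    funext i
    simp [← hA]
  have : Infinite K := IsAlgClosed.instInfinite
  have hone (j) : ((A j).sum fun _ p => p) = X j := by
    refine MvPolynomial.funext fun c => ?_
    have := congrFun (h1 c) j
    simpa [torusFlow, Finsupp.sum] using this
  have hequiv : IsTorusEquivariant (RingHom.id K) A := by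
    intro t c i m
    by_cases hm : m ∈ (A i).support
    · refine sub_eq_zero.1 (eq_zero_of_forall_sum_torusCharacter_eq_zero (S := (A i).support)
        (b := fun m => eval₂ (RingHom.id K) (torusFlow (RingHom.id K) A t c) (A i m) -
          eval₂ (RingHom.id K) c (A i m) * (torusCharacter K m t : K)) (fun s => ?_) m hm)
      simp only [sub_mul, Finset.sum_sub_distrib]
      refine sub_eq_zero.2 ((congrFun (hmul s t c) i).trans (Finset.sum_congr rfl fun m _ => ?_))
      dsimp only
      rw [map_mul, Units.val_mul]
      ring
    · simp [Finsupp.notMem_support_iff.1 hm]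
  obtain ⟨c, hc⟩ := exists_forall_eval_eq_zero hone hequiv
  have hconst (t i) : torusFlow (RingHom.id K) A t c i = eval c (A i 0) := by
    rw [torusFlow, Finsupp.sum_eq_single 0]
    · simp [torusCharacter]
    · intro m _ hm
      rw [eval₂_id, hc i m hm, zero_mul]
    · simp
  refine ⟨c, fun t i => ?_⟩
  rw [hA, hconst, ← hconst 1, h1]

/-- Any regular action of the `n`-torus on the free algebra on `n` generators has a fixed point
`c = (c_1, …, c_n)`: evaluating `σ(t)(z_i)` at `z_j ↦ c_j` gives back `c_i`.  Consequently,
after the translation of generators `z_i ↦ z_i − c_i` the images of the generators have zero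
constant term. -/
theorem torus_action_fixed_point
    {K : Type} [Field K] [IsAlgClosed K] {n : ℕ} (hn : 1 ≤ n)
    (σ : (Fin n → Kˣ) →* (FreeAlgebra K (Fin n) ≃ₐ[K] FreeAlgebra K (Fin n)))
    (hreg : TorusActionIsRegular σ) :
    ∃ c : Fin n → K,
      (∀ (t : Fin n → Kˣ) (i : Fin n),
        FreeAlgebra.lift K c (σ t (ι K i)) = c i) ∧
      (∀ τ : FreeAlgebra K (Fin n) ≃ₐ[K] FreeAlgebra K (Fin n),
        (∀ i : Fin n, τ (ι K i) = ι K i - algebraMap K (FreeAlgebra K (Fin n)) (c i)) →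
        ∀ (t : Fin n → Kˣ) (i : Fin n),
          FreeAlgebra.lift K (fun _ : Fin n => (0 : K)) (τ.symm (σ t (τ (ι K i)))) = 0) := by
  obtain ⟨c, hc⟩ := hreg.exists_fixed_point
  refine ⟨c, hc, fun τ hτ t i => ?_⟩
  have hτsymm (i) : τ.symm (ι K i) = ι K i + algebraMap K _ (c i) := by
    rw [AlgEquiv.symm_apply_eq, map_add, hτ, AlgEquiv.commutes, sub_add_cancel]
  have hcomp : (FreeAlgebra.lift K fun _ : Fin n => (0 : K)).comp
      (τ.symm : FreeAlgebra K (Fin n) →ₐ[K] _) = FreeAlgebra.lift K c := by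
    ext j
    simp [hτsymm]
  have := DFunLike.congr_fun hcomp (σ t (τ (ι K i)))
  rw [AlgHom.comp_apply] at this
  refine this.trans ?_
  rw [hτ, map_sub, map_sub, hc, AlgEquiv.commutes, AlgHom.commutes, Algebra.algebraMap_self_apply,
    sub_self]
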